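/- arXiv:2410.01243 — 5 statements merged into one kernel-verified Lean document; each statement's English description precedes it below -/
import Mathlib

section
/- Let λ and ρ be real polynomials with nonnegative coefficients satisfying λ(1) = 1 and ρ(1) = 1. Suppose 0 ≤ ε₁ ≤ ε₂ ≤ 1 and there exists x₀ ∈ (0,1] with x₀ ≤ ε₁·λ(1 − ρ(1 − x₀)). Then there exists x ∈ [x₀, 1] with x = ε₂·λ(1 − ρ(1 − x)). In particular, the set of ε ∈ [0,1] for which the equation x = ε·λ(1 − ρ(1 − x)) has a solution in (0,1] is upward closed, so the decoding threshold ε* = inf{ε ∈ [0,1] : x = ε·λ(1 − ρ(1 − x)) has a solution x ∈ (0,1]} is well defined as a sharp threshold. -/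
open Polynomial

theorem aux_nonneg (p : Polynomial ℝ) (hp : ∀ i, 0 ≤ p.coeff i) (y : ℝ) (h0 : 0 ≤ y) :
    0 ≤ p.eval y := by
  rw [Polynomial.eval_eq_sum_range]
  exact Finset.sum_nonneg fun i _ => mul_nonneg (hp i) (pow_nonneg h0 i)

theorem aux_le (p : Polynomial ℝ) (hp : ∀ i, 0 ≤ p.coeff i) (y : ℝ) (h0 : 0 ≤ y) (h1 : y ≤ 1) :
    p.eval y ≤ p.eval 1 := by
  rw [Polynomial.eval_eq_sum_range, Polynomial.eval_eq_sum_range]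
  exact Finset.sum_le_sum fun i _ =>
    mul_le_mul_of_nonneg_left (pow_le_pow_left₀ h0 h1 i) (hp i)

theorem aux_main (lam rho : Polynomial ℝ)
    (hlam : ∀ i, 0 ≤ lam.coeff i) (hrho : ∀ i, 0 ≤ rho.coeff i)
    (hlam1 : lam.eval 1 = 1) (hrho1 : rho.eval 1 = 1)
    (ε₁ ε₂ : ℝ) (hε₁ : 0 ≤ ε₁) (hε₁₂ : ε₁ ≤ ε₂) (hε₂ : ε₂ ≤ 1)
    (x₀ : ℝ) (hx₀ : x₀ ∈ Set.Ioc (0:ℝ) 1)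
    (hineq : x₀ ≤ ε₁ * lam.eval (1 - rho.eval (1 - x₀))) :
    ∃ x ∈ Set.Icc x₀ 1, x = ε₂ * lam.eval (1 - rho.eval (1 - x)) := by
  have key : ∀ x : ℝ, 0 ≤ x → x ≤ 1 → 0 ≤ lam.eval (1 - rho.eval (1 - x)) ∧
      lam.eval (1 - rho.eval (1 - x)) ≤ 1 := by
    intro x h0 h1
    have a := aux_nonneg rho hrho (1 - x) (by linarith)
    have b := aux_le rho hrho (1 - x) (by linarith) (by linarith)
    have c := aux_le lam hlam (1 - rho.eval (1 - x)) (by linarith) (by linarith)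
    exact ⟨aux_nonneg lam hlam _ (by linarith), by linarith⟩
  have hc : ContinuousOn (fun x : ℝ => x - ε₂ * lam.eval (1 - rho.eval (1 - x)))
      (Set.Icc x₀ 1) := by
    apply Continuous.continuousOn
    exact continuous_id.sub (continuous_const.mul (lam.continuous.comp
      (continuous_const.sub (rho.continuous.comp (continuous_const.sub continuous_id)))))
  have h0 := key x₀ hx₀.1.le hx₀.2
  have h1 := key 1 zero_le_one le_rfl
  have m := mul_le_mul_of_nonneg_right hε₁₂ h0.1
  have m1 := mul_le_one₀ hε₂ h1.1 h1.2
  obtain ⟨x, hx, hfx⟩ := intermediate_value_Icc hx₀.2 hc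
    (show (0:ℝ) ∈ Set.Icc _ _ from ⟨by linarith, by linarith⟩)
  exact ⟨x, hx, by dsimp only at hfx; linarith⟩

/-- If at erasure probability `ε₁` the fixed-point inequality
`x₀ ≤ ε₁·λ(1 − ρ(1 − x₀))` has a witness `x₀ ∈ (0,1]`, then for any larger
erasure probability `ε₂ ∈ [ε₁, 1]` there is an actual fixed point
`x ∈ [x₀, 1]` of `x = ε₂·λ(1 − ρ(1 − x))`.  In particular the set of
`ε ∈ [0,1]` for which `x = ε·λ(1 − ρ(1 − x))` has a solution in `(0,1]`
is upward closed, so the decoding threshold is a sharp threshold. -/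
theorem decoding_threshold_upward_closed
    (lam rho : Polynomial ℝ)
    (hlam : ∀ i, 0 ≤ lam.coeff i) (hrho : ∀ i, 0 ≤ rho.coeff i)
    (hlam1 : lam.eval 1 = 1) (hrho1 : rho.eval 1 = 1)
    (ε₁ ε₂ : ℝ) (hε₁ : 0 ≤ ε₁) (hε₁₂ : ε₁ ≤ ε₂) (hε₂ : ε₂ ≤ 1)
    (x₀ : ℝ) (hx₀ : x₀ ∈ Set.Ioc (0:ℝ) 1)
    (hineq : x₀ ≤ ε₁ * lam.eval (1 - rho.eval (1 - x₀))) :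
    (∃ x ∈ Set.Icc x₀ 1, x = ε₂ * lam.eval (1 - rho.eval (1 - x))) ∧
    (∀ ε ∈ Set.Icc (0:ℝ) 1,
      (∃ x ∈ Set.Ioc (0:ℝ) 1, x = ε * lam.eval (1 - rho.eval (1 - x))) →
      ∀ ε' ∈ Set.Icc (0:ℝ) 1, ε ≤ ε' →
        ∃ x ∈ Set.Ioc (0:ℝ) 1, x = ε' * lam.eval (1 - rho.eval (1 - x))) := by
  refine ⟨aux_main lam rho hlam hrho hlam1 hrho1 ε₁ ε₂ hε₁ hε₁₂ hε₂ x₀ hx₀ hineq, ?_⟩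
  rintro ε hε ⟨y, hy, hye⟩ ε' hε' hle
  obtain ⟨x, hx, h⟩ := aux_main lam rho hlam hrho hlam1 hrho1 ε ε' hε.1 hle hε'.2 y hy hye.le
  exact ⟨x, ⟨lt_of_lt_of_le hy.1 hx.1, hx.2⟩, h⟩
end

section
/- Matching condition: let λ and ρ be real polynomials with nonnegative coefficients satisfying λ(1) = 1, ρ(1) = 1, ρ(0) = 0, and ∫₀¹ λ(u) du > 0, and let ε ∈ (0,1]. If ε·λ(1 − ρ(1 − x)) < x for every x ∈ (0,1], then ε ≤ (∫₀¹ ρ(u) du) / (∫₀¹ λ(u) du). -/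
open Polynomial

/-- Matching condition: if `ε·λ(1 − ρ(1 − x)) < x` for every `x ∈ (0,1]`
(density evolution succeeds at erasure probability `ε`), then
`ε ≤ (∫₀¹ ρ)/(∫₀¹ λ)`. -/
theorem matching_condition
    (lam rho : Polynomial ℝ)
    (hlam : ∀ i, 0 ≤ lam.coeff i) (hrho : ∀ i, 0 ≤ rho.coeff i)
    (hlam1 : lam.eval 1 = 1) (hrho1 : rho.eval 1 = 1) (hrho0 : rho.eval 0 = 0)
    (hlamInt : 0 < ∫ u in (0:ℝ)..1, lam.eval u)
    (ε : ℝ) (hε : ε ∈ Set.Ioc (0:ℝ) 1)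
    (hsucc : ∀ x ∈ Set.Ioc (0:ℝ) 1, ε * lam.eval (1 - rho.eval (1 - x)) < x) :
    ε ≤ (∫ u in (0:ℝ)..1, rho.eval u) / (∫ u in (0:ℝ)..1, lam.eval u) := by
  have hI : ∀ p : Polynomial ℝ, IntervalIntegrable (fun x => p.eval x) MeasureTheory.volume 0 1 :=
    fun p => p.continuous.intervalIntegrable _ _
  rw [le_div_iff₀ hlamInt]
  have h1 : ∫ y in (0:ℝ)..1, ((fun v => lam.eval (1 - v)) ∘ fun y => rho.eval y) y * rho.derivative.eval y
      = ∫ v in (rho.eval 0)..(rho.eval 1), lam.eval (1 - v) :=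
    intervalIntegral.integral_comp_mul_deriv (fun x _ => rho.hasDerivAt x)
      rho.derivative.continuous.continuousOn (by fun_prop)
  rw [hrho0, hrho1, intervalIntegral.integral_comp_sub_left (fun v => lam.eval v)] at h1
  have h2 := intervalIntegral.integral_mul_deriv_eq_deriv_mul (a := (0:ℝ)) (b := 1)
    (u := fun y : ℝ => 1 - y) (u' := fun _ => (-1 : ℝ)) (v := fun y => rho.eval y)
    (v' := fun y => rho.derivative.eval y)
    (fun x _ => by simpa using (hasDerivAt_id x).const_sub 1) (fun x _ => rho.hasDerivAt x)
    (by simp) (hI _)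
  simp only [sub_self, sub_zero, zero_mul, hrho0, mul_zero, neg_mul, one_mul,
    intervalIntegral.integral_neg, sub_neg_eq_add, zero_add] at h1 h2
  rw [← h1, ← h2, ← intervalIntegral.integral_const_mul]
  refine intervalIntegral.integral_mono_on_of_le_Ioo zero_le_one
    (Continuous.intervalIntegrable (by simp only [Function.comp_def]; fun_prop) _ _)
    (Continuous.intervalIntegrable (by fun_prop) _ _) ?_
  intro y hy
  have hd : 0 ≤ rho.derivative.eval y := by
    rw [Polynomial.eval_eq_sum_range]
    refine Finset.sum_nonneg fun i _ => mul_nonneg ?_ (pow_nonneg hy.1.le _)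
    rw [Polynomial.coeff_derivative]
    exact mul_nonneg (hrho _) (by positivity)
  have := hsucc (1 - y) ⟨by linarith [hy.2], by linarith [hy.1]⟩
  rw [sub_sub_cancel] at this
  simp only [Function.comp]
  rw [← mul_assoc]
  exact mul_le_mul_of_nonneg_right this.le hd
end

section
/- Fix d > 0 and ε ∈ (0,1]. Let (R_n) and (T_n) be sequences of positive reals with R_n → ∞, T_n → ∞, and T_n/R_n → 0. Then (ε·T_n/R_n) · (1 − (1 − d/R_n)^{R_n/ε}) / (1 − (1 − d/R_n)^{T_n}) converges to ε·(1 − e^{−d/ε})/d as n → ∞. Moreover, if d ≥ 1 then this limit is strictly less than ε. -/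
open Filter Real

/-- If `T_n/R_n → 0` with `R_n, T_n → ∞`, then the matching-condition bound
`(ε·T_n/R_n)·(1 − (1 − d/R_n)^{R_n/ε})/(1 − (1 − d/R_n)^{T_n})` converges to
`ε·(1 − e^{−d/ε})/d`, which is strictly less than `ε` when `d ≥ 1`. -/
theorem matching_bound_limit_texts_slower
    (d ε : ℝ) (hd : 0 < d) (hε : ε ∈ Set.Ioc (0:ℝ) 1)
    (R T : ℕ → ℝ) (hR : ∀ n, 0 < R n) (hT : ∀ n, 0 < T n)
    (hRtop : Tendsto R atTop atTop) (hTtop : Tendsto T atTop atTop)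
    (hratio : Tendsto (fun n => T n / R n) atTop (nhds 0)) :
    Tendsto
      (fun n => (ε * T n / R n) * (1 - (1 - d / R n) ^ (R n / ε))
          / (1 - (1 - d / R n) ^ (T n)))
      atTop (nhds (ε * (1 - Real.exp (-d / ε)) / d)) ∧
    (1 ≤ d → ε * (1 - Real.exp (-d / ε)) / d < ε) := by
  obtain ⟨hε0, hε1⟩ := hε
  constructor
  · have hL : Tendsto (fun n => R n * Real.log (1 - d / R n)) atTop (nhds (-d)) := by
      have h := (Real.tendsto_mul_log_one_add_div_atTop (-d)).comp hRtop
      refine h.congr fun n => ?_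
      simp only [Function.comp]
      rw [neg_div, ← sub_eq_add_neg]
    have hu : Tendsto (fun n => T n / R n * (R n * Real.log (1 - d / R n))) atTop (nhds 0) := by
      simpa using hratio.mul hL
    have hLneg : ∀ᶠ n in atTop, R n * Real.log (1 - d / R n) < 0 :=
      hL.eventually_lt_const (by linarith)
    have hu' : Tendsto (fun n => T n / R n * (R n * Real.log (1 - d / R n))) atTop
        (nhdsWithin 0 {0}ᶜ) := by
      refine tendsto_nhdsWithin_iff.2 ⟨hu, ?_⟩
      filter_upwards [hLneg] with n hn
      exact mul_ne_zero (div_pos (hT n) (hR n)).ne' hn.ne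
    have hq := ((hasDerivAt_iff_tendsto_slope_zero.1 (Real.hasDerivAt_exp 0))).comp hu'
    have hA : Tendsto (fun n => 1 - Real.exp (R n * Real.log (1 - d / R n) / ε)) atTop
        (nhds (1 - Real.exp (-d / ε))) :=
      ((Real.continuous_exp.tendsto _).comp (hL.div_const ε)).const_sub 1
    have hmain := (hA.const_mul ε).div ((hq.mul hL).neg) (by simp [hd.ne'])
    have e : ε * (1 - Real.exp (-d / ε)) / d
        = ε * (1 - Real.exp (-d / ε)) / -(Real.exp 0 * -d) := by simp
    rw [e]
    refine hmain.congr' ?_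
    filter_upwards [hLneg, hRtop.eventually_gt_atTop d] with n hn hdn
    have hRn := hR n
    have hTn := hT n
    have hpos : 0 < 1 - d / R n := by
      rw [sub_pos, div_lt_one hRn]; exact hdn
    have hl : Real.log (1 - d / R n) ≠ 0 := fun h => by simp [h] at hn
    simp only [Function.comp, Pi.div_apply, zero_add, Real.exp_zero, smul_eq_mul]
    rw [Real.rpow_def_of_pos hpos, Real.rpow_def_of_pos hpos]
    have e1 : R n * Real.log (1 - d / R n) / ε = Real.log (1 - d / R n) * (R n / ε) := by ring
    have e2 : T n / R n * (R n * Real.log (1 - d / R n)) = Real.log (1 - d / R n) * T n := by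
      field_simp
    rw [e1, e2]
    generalize Real.log (1 - d / R n) = l at *
    have hlt : l * T n ≠ 0 := mul_ne_zero hl hTn.ne'
    have h3 : 1 - Real.exp (l * T n) ≠ 0 := by
      rw [sub_ne_zero]; intro h
      exact hlt (Real.exp_eq_one_iff _ |>.1 h.symm)
    have e3 : -((l * T n)⁻¹ * (Real.exp (l * T n) - 1) * (R n * l))
        = (1 - Real.exp (l * T n)) * (R n / T n) := by
      field_simp
      ring
    rw [e3]
    field_simp
  · intro h1
    rw [div_lt_iff₀ hd]
    have := Real.exp_pos (-d / ε)
    nlinarith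
end

section
/- Fix d ≥ 1 and ε ∈ (0,1). Let (R_n) and (T_n) be sequences of positive reals with R_n → ∞, T_n → ∞, and T_n/R_n → 0, and let p_n = d/R_n. Define λ_n(x) = (p_n·x + 1 − p_n)^{T_n − 1} and ρ̃_n(x) = (p_n·x + 1 − p_n)^{R_n/ε − 1}. Then for all sufficiently large n, (∫₀¹ ρ̃_n(u) du)/(∫₀¹ λ_n(u) du) < ε. -/
open Filter Real

/-- Part (a) of the compute-optimal scaling proposition: for mean text degree
`d ≥ 1` and erasure fraction `ε ∈ (0,1)`, if the number of texts grows strictly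
slower than the number of concepts (`T_n/R_n → 0`), then eventually the
matching-condition upper bound `(∫₀¹ ρ̃_n)/(∫₀¹ λ_n)` on the decoding threshold
falls below `ε`, where `λ_n(x) = (p_n x + 1 − p_n)^{T_n − 1}` and
`ρ̃_n(x) = (p_n x + 1 − p_n)^{R_n/ε − 1}` with `p_n = d/R_n`. -/
theorem matching_bound_eventually_below_eps
    (d ε : ℝ) (hd : 1 ≤ d) (hε : ε ∈ Set.Ioo (0:ℝ) 1)
    (R T : ℕ → ℝ) (hR : ∀ n, 0 < R n) (hT : ∀ n, 0 < T n)
    (hRtop : Tendsto R atTop atTop) (hTtop : Tendsto T atTop atTop)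
    (hratio : Tendsto (fun n => T n / R n) atTop (nhds 0)) :
    ∀ᶠ n in atTop,
      (∫ u in (0:ℝ)..1, ((d / R n) * u + 1 - d / R n) ^ (R n / ε - 1))
        / (∫ u in (0:ℝ)..1, ((d / R n) * u + 1 - d / R n) ^ (T n - 1)) < ε := by
  obtain ⟨hε0, hε1⟩ := hε
  have hd0 : 0 < d := by linarith
  set c := Real.exp (-(2 * d / ε)) with hc
  have hc0 : 0 < c := Real.exp_pos _
  have h1 : ∀ᶠ n in atTop, T n / R n < c / d :=
    hratio.eventually_lt_const (by positivity)
  filter_upwards [h1, hRtop.eventually_ge_atTop (2 * d), hTtop.eventually_ge_atTop 2]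
    with n hn hRn hTn
  have hR0 := hR n
  set p := d / R n with hp
  have hp0 : 0 < p := by positivity
  have hp2 : p ≤ 1 / 2 := by
    rw [hp, div_le_div_iff₀ hR0 (by norm_num)]; linarith
  have hpR : p * R n = d := by rw [hp]; field_simp
  have hpT : p * T n < c := by
    have : p * T n = d * (T n / R n) := by rw [hp]; ring
    rw [this]
    calc d * (T n / R n) < d * (c / d) := by gcongr
      _ = c := by field_simp
  -- numerator
  have hq : 0 < R n / ε := by positivity
  have hnum : (∫ u in (0:ℝ)..1, (p * u + 1 - p) ^ (R n / ε - 1)) ≤ ε * (1 - c) := by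
    have e1 : (∫ u in (0:ℝ)..1, (p * u + 1 - p) ^ (R n / ε - 1))
        = ∫ u in (0:ℝ)..1, (fun x : ℝ => x ^ (R n / ε - 1)) (p * u + (1 - p)) := by
      congr 1; ext u; simp only []; congr 1; ring
    rw [e1,
      intervalIntegral.integral_comp_mul_add (fun x : ℝ => x ^ (R n / ε - 1)) hp0.ne', integral_rpow (Or.inl (by linarith))]
    have hlow : c ≤ (1 - p) ^ (R n / ε) := by
      rw [Real.rpow_def_of_pos (by linarith), hc]
      apply Real.exp_le_exp.mpr
      have hl := Real.one_sub_inv_le_log_of_pos (show 0 < 1 - p by linarith)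
      have hl2 : -(2 * p) ≤ 1 - (1 - p)⁻¹ := by
        have : (1 - p)⁻¹ ≤ 1 + 2 * p := by
          rw [inv_le_iff_one_le_mul₀ (by linarith)]; nlinarith
        linarith
      calc -(2 * d / ε) = -(2 * p) * (R n / ε) := by rw [← hpR]; ring
        _ ≤ Real.log (1 - p) * (R n / ε) := by gcongr; linarith
    have e2 : p * 1 + (1 - p) = 1 := by ring
    have e3 : p * 0 + (1 - p) = 1 - p := by ring
    rw [e2, e3, sub_add_cancel, Real.one_rpow, smul_eq_mul]
    have e4 : p⁻¹ * ((1 - (1 - p) ^ (R n / ε)) / (R n / ε))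
        = ε / d * (1 - (1 - p) ^ (R n / ε)) := by
      rw [← hpR]; field_simp
    rw [e4]
    have hle : (1 - p) ^ (R n / ε) ≤ 1 :=
      Real.rpow_le_one (by linarith) (by linarith) hq.le
    have hdd : ε / d ≤ ε := div_le_self hε0.le hd
    calc ε / d * (1 - (1 - p) ^ (R n / ε)) ≤ ε * (1 - (1 - p) ^ (R n / ε)) := by
          gcongr
      _ ≤ ε * (1 - c) := by gcongr
  have hc1 : c < 1 := by
    rw [hc, Real.exp_lt_one_iff]
    have : 0 < 2 * d / ε := by positivity
    linarith
  have hden : 1 - c < ∫ u in (0:ℝ)..1, (p * u + 1 - p) ^ (T n - 1) := by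
    have hb := one_add_mul_self_le_rpow_one_add (show (-1:ℝ) ≤ -p by linarith)
      (show 1 ≤ T n - 1 by linarith)
    have hcont : Continuous (fun u : ℝ => (p * u + 1 - p) ^ (T n - 1)) :=
      Continuous.rpow_const (by fun_prop) (fun _ => Or.inr (by linarith))
    have hm : (∫ u in (0:ℝ)..1, (1 + -p) ^ (T n - 1))
        ≤ ∫ u in (0:ℝ)..1, (p * u + 1 - p) ^ (T n - 1) := by
      apply intervalIntegral.integral_mono_on (by norm_num) (by simp)
        (hcont.intervalIntegrable _ _)
      intro u hu
      have := mul_nonneg hp0.le hu.1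
      exact Real.rpow_le_rpow (by linarith) (by linarith) (by linarith)
    simp only [intervalIntegral.integral_const, sub_zero, one_smul] at hm
    nlinarith
  rw [div_lt_iff₀ (by linarith)]
  calc _ ≤ ε * (1 - c) := hnum
    _ < _ := by gcongr
end

section
/- Fix x ∈ (0,1], d > 0 and ε ∈ (0,1]. Let (R_n) and (T_n) be sequences of positive reals with R_n → ∞, T_n → ∞ and T_n/R_n → ∞ (and d/R_n ≤ 1, x·d/R_n ≤ 1 for all n). Then (1 − (d/R_n)·(1 − x·d/R_n)^{R_n/ε − 1})^{T_n − 1} → 0 as n → ∞. -/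
open Filter Real

/-- Part (b) of the compute-optimal scaling proposition: if the number of texts
grows strictly faster than the number of concepts (`T_n/R_n → ∞`), then for any
fixed `x ∈ (0,1]` the density-evolution quantity
`(1 − (d/R_n)·(1 − x·d/R_n)^{R_n/ε − 1})^{T_n − 1}` tends to `0`. -/
theorem density_evolution_vanishes_texts_faster
    (x d ε : ℝ) (hx : x ∈ Set.Ioc (0:ℝ) 1) (hd : 0 < d)
    (hε : ε ∈ Set.Ioc (0:ℝ) 1)
    (R T : ℕ → ℝ) (hR : ∀ n, 0 < R n) (hT : ∀ n, 0 < T n)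
    (hdR : ∀ n, d / R n ≤ 1) (hxdR : ∀ n, x * d / R n ≤ 1)
    (hRtop : Tendsto R atTop atTop) (hTtop : Tendsto T atTop atTop)
    (hratio : Tendsto (fun n => T n / R n) atTop atTop) :
    Tendsto
      (fun n => (1 - (d / R n) * (1 - x * d / R n) ^ (R n / ε - 1)) ^ (T n - 1))
      atTop (nhds 0) := by
  obtain ⟨hx0, hx1⟩ := hx
  obtain ⟨he0, he1⟩ := hε
  have hxd : 0 < x * d := mul_pos hx0 hd
  set c : ℝ := Real.exp (-(2 * (x * d) / ε)) with hc
  have hc0 : 0 < c := Real.exp_pos _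
  have hlim : Tendsto (fun n => Real.exp (-((d * c / 2) * (T n / R n)))) atTop (nhds 0) := by
    apply Real.tendsto_exp_neg_atTop_nhds_zero.comp
    exact hratio.const_mul_atTop (by positivity)
  have key : ∀ᶠ n in atTop,
      0 ≤ 1 - (d / R n) * (1 - x * d / R n) ^ (R n / ε - 1) ∧
      1 - (d / R n) * (1 - x * d / R n) ^ (R n / ε - 1) ≤ Real.exp (-(d * c / R n)) := by
    filter_upwards [hRtop.eventually_ge_atTop 1, hRtop.eventually_ge_atTop (2 * (x * d))]
      with n h1 h2
    have hRn := hR n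
    have hu0 : 0 < x * d / R n := by positivity
    have hu : x * d / R n ≤ 1 / 2 := by
      rw [div_le_iff₀ hRn]; linarith
    have hdn : 0 < d / R n := by positivity
    have hexp : 0 ≤ R n / ε - 1 := by
      have : 1 ≤ R n / ε := by rw [le_div_iff₀ he0]; linarith
      linarith
    have hle1 : (1 - x * d / R n) ^ (R n / ε - 1) ≤ 1 :=
      Real.rpow_le_one (by linarith) (by linarith) hexp
    have hge : c ≤ (1 - x * d / R n) ^ (R n / ε - 1) := by
      have hb : Real.exp (-(2 * (x * d / R n))) ≤ 1 - x * d / R n := by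
        generalize x * d / R n = u at *
        rw [Real.exp_neg, inv_le_iff_one_le_mul₀ (Real.exp_pos _)]
        have := Real.add_one_le_exp (2 * u)
        nlinarith
      calc c = (Real.exp (-(2 * (x * d / R n)))) ^ (R n / ε) := by
            rw [← Real.exp_mul, hc]; congr 1; field_simp
        _ ≤ (1 - x * d / R n) ^ (R n / ε) :=
            Real.rpow_le_rpow (Real.exp_pos _).le hb (by linarith)
        _ ≤ _ := Real.rpow_le_rpow_of_exponent_ge (by linarith) (by linarith) (by linarith)
    constructor
    · nlinarith [hdR n]
    · have h3 := Real.add_one_le_exp (-(d * c / R n))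
      have h4 : d * c / R n = d / R n * c := by ring
      have h5 := mul_le_mul_of_nonneg_left hge hdn.le
      linarith
  refine tendsto_of_tendsto_of_tendsto_of_le_of_le' tendsto_const_nhds hlim ?_ ?_
  · filter_upwards [key] with n hn
    exact Real.rpow_nonneg hn.1 _
  · filter_upwards [key, hTtop.eventually_ge_atTop 2] with n hn hT2
    refine (Real.rpow_le_rpow hn.1 hn.2 (by linarith)).trans ?_
    rw [← Real.exp_mul, Real.exp_le_exp]
    have hRn := hR n
    have h6 : 0 < d * c / R n := by positivity
    have h7 : d * c / 2 * (T n / R n) = d * c / R n * (T n / 2) := by ring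
    rw [h7]
    nlinarith
end
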